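/- Fix N ∈ ℕ^d with N_max = max_j N_j. Almost surely, sup_{u ∈ [0,1]^d} |ĉ^[N](u) − c̃^[N](u)| ≤ 2·3^d·(N_max + 1)^{2d+2} · Σ_{j=1}^d sup_{x∈ℝ} |F̂_j(x) − F_j(x)|, where ĉ^[N] is the plug-in estimator (using the empirical marginal CDFs F̂_j) and c̃^[N] is the pseudo-estimator (using the true marginal CDFs F_j). -/

import Mathlib

/-!
The bound holds for every `ω`, not only almost surely, and without the factor `2 * 3 ^ d`.

On `[-1,1]` the Legendre polynomials satisfy `|L_m| ≤ 1` (`abs_legP_le_one`) and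
`|L_m'| ≤ m(m+1)/2` (`abs_legD_le`). The first follows from factoring the generating function
`(1 - 2xX + X²)^(-1/2) = (1 - zX)^(-1/2) (1 - z̄X)^(-1/2)` with `|z| = 1`, which writes `L_m(x)` as a
combination of unimodular numbers with nonnegative weights of total mass `L_m(1) = 1`. The second
follows by induction from `L'_{m+1} = x L'_m + (m+1) L_m`.

Hence `|Q_m| ≤ ∏ⱼ √(2mⱼ+1)` on the cube, and telescoping the product bounds the increments of
`Q_m` by `∏ⱼ √(2mⱼ+1) · (N_max+1)² · ∑ⱼ |uⱼ - vⱼ|` for `m ≤ N` (`abs_Qd_le`, `abs_Qd_sub_le`).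
Both the empirical and the true marginal CDFs take values in `[0,1]`, so the difference of
the estimators is at most
`∑_{m ≤ N} ∏ⱼ (2mⱼ+1) · (N_max+1)² · ∑ⱼ sup |F̂ⱼ - Fⱼ|`, and
`∑_{m ≤ N} ∏ⱼ (2mⱼ+1) = ∏ⱼ (Nⱼ+1)² ≤ (N_max+1)^(2d)`.
-/

open MeasureTheory Filter

/-- Classical Legendre polynomials: `L₀ = 1`, `L₁ x = x`,
`(m+2) L_{m+2} x = (2m+3) x L_{m+1} x - (m+1) L_m x`. -/
noncomputable def legP : ℕ → ℝ → ℝ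
  | 0, _ => 1
  | 1, x => x
  | m + 2, x =>
      ((2 * (m : ℝ) + 3) * x * legP (m + 1) x - ((m : ℝ) + 1) * legP m x) / ((m : ℝ) + 2)

/-- Shifted orthonormal Legendre polynomial on `[0,1]`: `Q m x = √(2m+1) · L_m (2x-1)`. -/
noncomputable def Q (m : ℕ) (x : ℝ) : ℝ := Real.sqrt (2 * (m : ℝ) + 1) * legP m (2 * x - 1)

/-- Tensor products of shifted Legendre polynomials, indexed by multi-indices. -/
noncomputable def Qd {d : ℕ} (m : Fin d → ℕ) (u : Fin d → ℝ) : ℝ := ∏ j, Q (m j) (u j)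

/-- Lebesgue measure on the cube `[0,1]^d`. -/
noncomputable def cube (d : ℕ) : Measure (Fin d → ℝ) :=
  Measure.pi fun _ => volume.restrict (Set.Icc (0 : ℝ) 1)

/-- Empirical CDF of the sample `v : Fin n → ℝ`. -/
noncomputable def empCDF (n : ℕ) (v : Fin n → ℝ) (t : ℝ) : ℝ :=
  (1 / (n : ℝ)) * ∑ i, if v i ≤ t then (1 : ℝ) else 0

/-- Plug-in coefficient estimator `ρ̂_m = (1/n) Σ_i ∏_j Q_{m_j}(F̂_j(x_{ij}))`. -/
noncomputable def rhoHatRaw (d n : ℕ) (x : Fin n → Fin d → ℝ) (m : Fin d → ℕ) : ℝ :=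
  (1 / (n : ℝ)) * ∑ i, ∏ j, Q (m j) (empCDF n (fun k => x k j) (x i j))

/-- Pseudo coefficient estimator `ρ̃_m = (1/n) Σ_i ∏_j Q_{m_j}(F_j(x_{ij}))` (known margins). -/
noncomputable def rhoTilde (d n : ℕ) (F : Fin d → ℝ → ℝ) (x : Fin n → Fin d → ℝ)
    (m : Fin d → ℕ) : ℝ :=
  (1 / (n : ℝ)) * ∑ i, ∏ j, Q (m j) (F j (x i j))

/-- Plug-in copula density estimator `ĉ^[N](u) = Σ_{m ≤ N} ρ̂_m Q_m(u)`. -/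
noncomputable def densEstRaw (d n : ℕ) (x : Fin n → Fin d → ℝ) (N : Fin d → ℕ)
    (u : Fin d → ℝ) : ℝ :=
  ∑ m ∈ Fintype.piFinset fun j => Finset.range (N j + 1), rhoHatRaw d n x m * Qd m u

/-- Pseudo copula density estimator `c̃^[N](u) = Σ_{m ≤ N} ρ̃_m Q_m(u)`. -/
noncomputable def densTilde (d n : ℕ) (F : Fin d → ℝ → ℝ) (x : Fin n → Fin d → ℝ)
    (N : Fin d → ℕ) (u : Fin d → ℝ) : ℝ :=
  ∑ m ∈ Fintype.piFinset fun j => Finset.range (N j + 1), rhoTilde d n F x m * Qd m u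

/-! ### The uniform bound for Legendre polynomials -/

/-- The binomial series `∑ₖ 4⁻ᵏ (2k choose k) zᵏ Xᵏ`, i.e. `(1 - zX)^(-1/2)`. -/
noncomputable def invSqrtSeries (z : ℂ) : PowerSeries ℂ :=
  PowerSeries.mk fun k => (((k.centralBinom : ℝ) / 4 ^ k : ℝ) : ℂ) * z ^ k

/-- The differential equation `(1 - zX) A' = (z/2) A` satisfied by `A = (1 - zX)^(-1/2)`. -/
lemma invSqrtSeries_ode (z : ℂ) :
    (1 - PowerSeries.C z * PowerSeries.X) * PowerSeries.derivative ℂ (invSqrtSeries z)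
      = PowerSeries.C (z / 2) * invSqrtSeries z := by
  have key : ∀ k : ℕ, ((k : ℂ) + 1) * ((k + 1).centralBinom : ℂ)
      = 2 * (2 * k + 1) * (k.centralBinom : ℂ) := by
    intro k
    exact_mod_cast Nat.succ_mul_centralBinom_succ k
  ext k
  rw [sub_mul, one_mul, mul_assoc, map_sub, PowerSeries.coeff_C_mul, PowerSeries.coeff_C_mul]
  cases k with
  | zero =>
    simp [invSqrtSeries, PowerSeries.coeff_derivative, Nat.centralBinom]
    norm_num [Nat.choose]
    ring
  | succ k =>
    rw [PowerSeries.coeff_succ_X_mul]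
    simp only [invSqrtSeries, PowerSeries.coeff_derivative, PowerSeries.coeff_mk]
    have h := key (k + 1)
    push_cast at h ⊢
    have h4 : (4 : ℂ) ^ k ≠ 0 := pow_ne_zero _ (by norm_num)
    simp only [pow_succ]
    field_simp
    linear_combination 2 * z ^ k * z ^ 2 * h

/-- The coefficients of `(1 - zX)^(-1/2) (1 - wX)^(-1/2)` are the Legendre polynomials at `x`
when `zw = 1` and `z + w = 2x`: this product is `(1 - 2xX + X²)^(-1/2)`. -/
lemma coeff_invSqrtSeries_mul (z w : ℂ) (x : ℝ) (hzw : z * w = 1) (hx : z + w = 2 * x) (n : ℕ) :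
    PowerSeries.coeff n (invSqrtSeries z * invSqrtSeries w) = (legP n x : ℂ) := by
  set P := invSqrtSeries z * invSqrtSeries w with hP
  have hd : PowerSeries.derivative ℂ P + PowerSeries.X * (PowerSeries.X *
        PowerSeries.derivative ℂ P) + PowerSeries.X * P
      = PowerSeries.C (x : ℂ) * P
        + PowerSeries.C (2 * x : ℂ) * (PowerSeries.X * PowerSeries.derivative ℂ P) := by
    have hA := invSqrtSeries_ode z
    have hB := invSqrtSeries_ode w
    have h1 : (PowerSeries.C z : PowerSeries ℂ) * PowerSeries.C w = 1 := by
      rw [← map_mul, hzw, map_one]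
    have h2 : (PowerSeries.C (2 * x : ℂ) : PowerSeries ℂ)
        = PowerSeries.C z + PowerSeries.C w := by
      rw [← map_add, hx]
    have hz2 : (PowerSeries.C z : PowerSeries ℂ) = 2 * PowerSeries.C (z / 2) := by
      rw [two_mul, ← map_add]; congr 1; ring
    have hw2 : (PowerSeries.C w : PowerSeries ℂ) = 2 * PowerSeries.C (w / 2) := by
      rw [two_mul, ← map_add]; congr 1; ring
    have h3 : (PowerSeries.C (x : ℂ) : PowerSeries ℂ)
        = PowerSeries.C (z / 2) + PowerSeries.C (w / 2) := by
      rw [← map_add]; congr 1; linear_combination -hx / 2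
    have hPd : PowerSeries.derivative ℂ P
        = invSqrtSeries z * PowerSeries.derivative ℂ (invSqrtSeries w)
          + invSqrtSeries w * PowerSeries.derivative ℂ (invSqrtSeries z) := by
      rw [hP, Derivation.leibniz]; simp [smul_eq_mul]
    rw [h2, h3, hPd, hP]
    rw [hz2] at hA h1
    rw [hw2] at hB h1
    rw [hz2, hw2]
    generalize PowerSeries.C (z / 2) = s at *
    generalize PowerSeries.C (w / 2) = t at *
    generalize PowerSeries.derivative ℂ (invSqrtSeries z) = A' at *
    generalize PowerSeries.derivative ℂ (invSqrtSeries w) = B' at *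
    generalize invSqrtSeries z = A at *
    generalize invSqrtSeries w = B at *
    linear_combination (1 - 2 * t * PowerSeries.X) * B * hA
      + (1 - 2 * s * PowerSeries.X) * A * hB
      - (PowerSeries.X * PowerSeries.X * (A * B' + B * A') + PowerSeries.X * A * B) * h1
  induction n using Nat.twoStepInduction with
  | zero => simp [hP, invSqrtSeries, legP, PowerSeries.coeff_mul]
  | one =>
    have h0 := congrArg (PowerSeries.coeff 0) hd
    have hP0 : PowerSeries.coeff 0 P = 1 := by
      simp [hP, invSqrtSeries, PowerSeries.coeff_mul]
    rw [map_add, map_add, map_add, PowerSeries.coeff_C_mul, PowerSeries.coeff_C_mul,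
      PowerSeries.coeff_zero_X_mul, PowerSeries.coeff_zero_X_mul, PowerSeries.coeff_zero_X_mul,
      PowerSeries.coeff_derivative, hP0] at h0
    simpa [legP] using h0
  | more m ih0 ih1 =>
    have h := congrArg (PowerSeries.coeff (m + 1)) hd
    have hm : PowerSeries.coeff m (PowerSeries.X * PowerSeries.derivative ℂ P)
        = m * PowerSeries.coeff m P := by
      cases m with
      | zero => simp
      | succ k =>
        rw [PowerSeries.coeff_succ_X_mul, PowerSeries.coeff_derivative]
        push_cast; ring
    rw [map_add, map_add, map_add, PowerSeries.coeff_C_mul, PowerSeries.coeff_C_mul,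
      PowerSeries.coeff_succ_X_mul, PowerSeries.coeff_succ_X_mul, PowerSeries.coeff_succ_X_mul,
      hm, PowerSeries.coeff_derivative, PowerSeries.coeff_derivative, ih0, ih1] at h
    have hne : ((m : ℂ) + 2) ≠ 0 := by exact_mod_cast (by omega : m + 2 ≠ 0)
    simp only [legP]
    push_cast at h ⊢
    rw [eq_div_iff hne]
    linear_combination h

lemma legP_one (n : ℕ) : legP n 1 = 1 := by
  induction n using Nat.twoStepInduction with
  | zero => rfl
  | one => rfl
  | more m ih0 ih1 =>
    simp only [legP, ih0, ih1]
    field_simp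
    ring

/-- With `z = x + i√(1 - x²)` on the unit circle, `L_n(x)` is a combination of the unimodular
numbers `zⁱ z̄ʲ`, `i + j = n`, with nonnegative coefficients whose sum is `L_n(1) = 1`. -/
lemma abs_legP_le_one (n : ℕ) {x : ℝ} (hx : x ∈ Set.Icc (-1 : ℝ) 1) : |legP n x| ≤ 1 := by
  have hs : 0 ≤ 1 - x ^ 2 := by nlinarith [hx.1, hx.2]
  set s := Real.sqrt (1 - x ^ 2) with hsdef
  have hss : s * s = 1 - x ^ 2 := Real.mul_self_sqrt hs
  set z : ℂ := ⟨x, s⟩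
  set w : ℂ := ⟨x, -s⟩
  have hzw : z * w = 1 := by
    apply Complex.ext <;> simp [z, w] <;> nlinarith
  have hzw2 : z + w = 2 * x := by
    apply Complex.ext <;> simp [z, w]; ring
  have hz : ‖z‖ = 1 := by
    rw [← sq_eq_sq₀ (norm_nonneg _) zero_le_one, ← Complex.normSq_eq_norm_sq, Complex.normSq_mk]
    linarith
  have hw : ‖w‖ = 1 := by
    rw [← sq_eq_sq₀ (norm_nonneg _) zero_le_one, ← Complex.normSq_eq_norm_sq, Complex.normSq_mk]
    linarith
  have h := coeff_invSqrtSeries_mul z w x hzw hzw2 n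
  have h1 := coeff_invSqrtSeries_mul 1 1 1 (by norm_num) (by norm_num) n
  rw [legP_one] at h1
  simp only [PowerSeries.coeff_mul, invSqrtSeries, PowerSeries.coeff_mk, one_pow, mul_one] at h h1
  have h1' : ∑ p ∈ Finset.HasAntidiagonal.antidiagonal n,
      ((p.1.centralBinom : ℝ) / 4 ^ p.1) * ((p.2.centralBinom : ℝ) / 4 ^ p.2) = 1 := by
    exact_mod_cast h1
  rw [← Real.norm_eq_abs, ← Complex.norm_real, ← h, ← h1']
  refine norm_sum_le_of_le _ fun p _ => ?_
  rw [norm_mul, norm_mul, norm_mul, norm_pow, norm_pow, hz, hw, one_pow, one_pow, mul_one,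
    mul_one, Complex.norm_real, Complex.norm_real, Real.norm_of_nonneg (by positivity),
    Real.norm_of_nonneg (by positivity)]

/-! ### The Lipschitz bound for Legendre polynomials -/

/-- The derivative of `legP`, via the differentiated three-term recursion. -/
noncomputable def legD : ℕ → ℝ → ℝ
  | 0, _ => 0
  | 1, _ => 1
  | m + 2, x =>
      ((2 * (m : ℝ) + 3) * (legP (m + 1) x + x * legD (m + 1) x)
        - ((m : ℝ) + 1) * legD m x) / ((m : ℝ) + 2)

lemma hasDerivAt_legP (n : ℕ) (x : ℝ) : HasDerivAt (legP n) (legD n x) x := by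
  induction n using Nat.twoStepInduction with
  | zero => exact hasDerivAt_const x 1
  | one => exact hasDerivAt_id x
  | more m ih0 ih1 =>
    have h := (((((hasDerivAt_id x).const_mul (2 * (m : ℝ) + 3)).mul ih1).sub
      (ih0.const_mul ((m : ℝ) + 1))).div_const ((m : ℝ) + 2))
    refine (h.congr_deriv ?_).congr_of_eventuallyEq (Eventually.of_forall fun y => ?_)
    · simp only [legD, id]; ring
    · simp [legP]

/-- The identities `L'_{n+1} = x L'_n + (n+1) L_n` and `x L'_{n+1} - L'_n = (n+1) L_{n+1}`; each is
needed for the inductive step of the other. -/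
lemma legD_succ (n : ℕ) (x : ℝ) :
    legD (n + 1) x = x * legD n x + (n + 1) * legP n x ∧
      x * legD (n + 1) x - legD n x = (n + 1) * legP (n + 1) x := by
  induction n with
  | zero => simp [legD, legP]
  | succ n ih =>
    obtain ⟨hA, hB⟩ := ih
    have hne : (n : ℝ) + 2 ≠ 0 := by positivity
    have hA' : legD (n + 2) x = x * legD (n + 1) x + (n + 2) * legP (n + 1) x := by
      rw [legD, div_eq_iff hne]
      linear_combination ((n : ℝ) + 1) * hB
    have hP : ((n : ℝ) + 2) * legP (n + 2) x
        = (2 * (n : ℝ) + 3) * x * legP (n + 1) x - ((n : ℝ) + 1) * legP n x := by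
      rw [legP, mul_div_cancel₀ _ hne]
    refine ⟨?_, ?_⟩
    · push_cast; linear_combination hA'
    · push_cast; linear_combination x * hA' - hP - hA + x * hB

lemma abs_legD_le (n : ℕ) {x : ℝ} (hx : x ∈ Set.Icc (-1 : ℝ) 1) :
    |legD n x| ≤ n * (n + 1) / 2 := by
  induction n with
  | zero => simp [legD]
  | succ n ih =>
    rw [(legD_succ n x).1]
    have h1 : |x * legD n x| ≤ 1 * (n * (n + 1) / 2) := by
      rw [abs_mul]; exact mul_le_mul (abs_le.2 hx) ih (abs_nonneg _) zero_le_one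
    have h2 : |((n : ℝ) + 1) * legP n x| ≤ (n + 1) * 1 := by
      rw [abs_mul, abs_of_nonneg (by positivity : (0 : ℝ) ≤ n + 1)]
      exact mul_le_mul_of_nonneg_left (abs_legP_le_one n hx) (by positivity)
    refine (abs_add_le _ _).trans ((add_le_add h1 h2).trans (le_of_eq ?_))
    push_cast; ring

lemma abs_legP_sub_le (n : ℕ) {x y : ℝ} (hx : x ∈ Set.Icc (-1 : ℝ) 1)
    (hy : y ∈ Set.Icc (-1 : ℝ) 1) :
    |legP n x - legP n y| ≤ n * (n + 1) / 2 * |x - y| :=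
  (convex_Icc (-1 : ℝ) 1).norm_image_sub_le_of_norm_hasDerivWithin_le
    (fun t _ => (hasDerivAt_legP n t).hasDerivWithinAt) (fun _ ht => abs_legD_le n ht) hy hx

/-! ### Tensor products -/

lemma abs_prod_sub_prod_le {ι : Type*} (s : Finset ι) (a b : ι → ℝ)
    (ha : ∀ i, |a i| ≤ 1) (hb : ∀ i, |b i| ≤ 1) :
    |∏ i ∈ s, a i - ∏ i ∈ s, b i| ≤ ∑ i ∈ s, |a i - b i| := by
  classical
  induction s using Finset.induction_on with
  | empty => simp
  | insert k s hk ih =>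
    rw [Finset.prod_insert hk, Finset.prod_insert hk, Finset.sum_insert hk]
    have hp : |∏ i ∈ s, a i| ≤ 1 := by
      rw [Finset.abs_prod]
      exact Finset.prod_le_one (fun _ _ => abs_nonneg _) fun i _ => ha i
    have he : a k * ∏ i ∈ s, a i - b k * ∏ i ∈ s, b i
        = (a k - b k) * ∏ i ∈ s, a i + b k * (∏ i ∈ s, a i - ∏ i ∈ s, b i) := by ring
    rw [he]
    refine (abs_add_le _ _).trans (add_le_add ?_ ?_)
    · rw [abs_mul]; exact mul_le_of_le_one_right (abs_nonneg _) hp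
    · rw [abs_mul]; exact (mul_le_of_le_one_left (abs_nonneg _) (hb k)).trans ih

/-- The sup norm `∏ⱼ √(2mⱼ+1)` of `Qd m` on the unit cube. -/
noncomputable def QdSup {d : ℕ} (m : Fin d → ℕ) : ℝ := ∏ j, Real.sqrt (2 * (m j : ℝ) + 1)

lemma QdSup_nonneg {d : ℕ} (m : Fin d → ℕ) : 0 ≤ QdSup m :=
  Finset.prod_nonneg fun _ _ => Real.sqrt_nonneg _

lemma Qd_eq {d : ℕ} (m : Fin d → ℕ) (u : Fin d → ℝ) :
    Qd m u = QdSup m * ∏ j, legP (m j) (2 * u j - 1) := by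
  simp only [Qd, Q, QdSup, Finset.prod_mul_distrib]

lemma two_mul_sub_one_mem {t : ℝ} (ht : t ∈ Set.Icc (0 : ℝ) 1) :
    2 * t - 1 ∈ Set.Icc (-1 : ℝ) 1 :=
  ⟨by linarith [ht.1], by linarith [ht.2]⟩

lemma abs_Qd_le {d : ℕ} (m : Fin d → ℕ) (u : Fin d → ℝ) (hu : ∀ j, u j ∈ Set.Icc (0 : ℝ) 1) :
    |Qd m u| ≤ QdSup m := by
  rw [Qd_eq, abs_mul, abs_of_nonneg (QdSup_nonneg m), Finset.abs_prod]
  exact mul_le_of_le_one_right (QdSup_nonneg m) (Finset.prod_le_one (fun _ _ => abs_nonneg _)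
    fun j _ => abs_legP_le_one _ (two_mul_sub_one_mem (hu j)))

lemma abs_Qd_sub_le {d : ℕ} (m : Fin d → ℕ) (M : ℝ) (hM : ∀ j, (m j : ℝ) ≤ M)
    (u v : Fin d → ℝ) (hu : ∀ j, u j ∈ Set.Icc (0 : ℝ) 1) (hv : ∀ j, v j ∈ Set.Icc (0 : ℝ) 1) :
    |Qd m u - Qd m v| ≤ QdSup m * ((M + 1) ^ 2 * ∑ j, |u j - v j|) := by
  rw [Qd_eq, Qd_eq, ← mul_sub, abs_mul, abs_of_nonneg (QdSup_nonneg m)]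
  refine mul_le_mul_of_nonneg_left ?_ (QdSup_nonneg m)
  refine (abs_prod_sub_prod_le _ _ _
    (fun j => abs_legP_le_one _ (two_mul_sub_one_mem (hu j)))
    (fun j => abs_legP_le_one _ (two_mul_sub_one_mem (hv j)))).trans ?_
  rw [Finset.mul_sum]
  refine Finset.sum_le_sum fun j _ => ?_
  refine (abs_legP_sub_le _ (two_mul_sub_one_mem (hu j)) (two_mul_sub_one_mem (hv j))).trans ?_
  have he : 2 * u j - 1 - (2 * v j - 1) = 2 * (u j - v j) := by ring
  rw [he, abs_mul, abs_two, ← mul_assoc]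
  refine mul_le_mul_of_nonneg_right ?_ (abs_nonneg _)
  have h0 : (0 : ℝ) ≤ m j := Nat.cast_nonneg _
  nlinarith [hM j]

/-- Since `∑_{k ≤ K} (2k+1) = (K+1)²`, the sum of `∏ⱼ (2mⱼ+1)` over the box `m ≤ N` factors
as `∏ⱼ (Nⱼ+1)²`. -/
lemma sum_QdSup_sq_le {d : ℕ} (N : Fin d → ℕ) (M : ℝ) (hM : ∀ j, (N j : ℝ) ≤ M) :
    ∑ m ∈ Fintype.piFinset fun j => Finset.range (N j + 1), QdSup m * QdSup m
      ≤ (M + 1) ^ (2 * d) := by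
  have hsq : ∀ m : Fin d → ℕ, QdSup m * QdSup m = ∏ j, (2 * (m j : ℝ) + 1) := by
    intro m
    rw [QdSup, ← Finset.prod_mul_distrib]
    exact Finset.prod_congr rfl fun j _ => Real.mul_self_sqrt (by positivity)
  have hsum : ∀ K : ℕ, ∑ k ∈ Finset.range K, (2 * (k : ℝ) + 1) = (K : ℝ) ^ 2 := by
    intro K
    induction K with
    | zero => simp
    | succ K ih => rw [Finset.sum_range_succ, ih]; push_cast; ring
  simp only [hsq]
  rw [← Finset.prod_univ_sum (fun j => Finset.range (N j + 1)) (fun _ k => 2 * (k : ℝ) + 1)]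
  simp only [hsum]
  calc ∏ j, (((N j + 1 : ℕ) : ℝ)) ^ 2 ≤ ∏ _j : Fin d, (M + 1) ^ 2 := by
        refine Finset.prod_le_prod (fun _ _ => by positivity) fun j _ => ?_
        push_cast
        gcongr
        exact hM j
    _ = (M + 1) ^ (2 * d) := by simp [pow_mul]

lemma empCDF_mem (n : ℕ) (v : Fin n → ℝ) (t : ℝ) : empCDF n v t ∈ Set.Icc (0 : ℝ) 1 := by
  have h0 : (0 : ℝ) ≤ ∑ i, if v i ≤ t then (1 : ℝ) else 0 :=
    Finset.sum_nonneg fun i _ => by split_ifs <;> norm_num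
  have h1 : (∑ i, if v i ≤ t then (1 : ℝ) else 0) ≤ n := by
    refine (Finset.sum_le_card_nsmul _ _ 1 fun i _ => by split_ifs <;> norm_num).trans ?_
    simp
  refine ⟨mul_nonneg (by positivity) h0, ?_⟩
  rw [empCDF, one_div_mul_eq_div]
  exact div_le_one_of_le₀ h1 (Nat.cast_nonneg n)

/-- Deterministic form of the estimate: it holds for every nonempty sample and every family of functions
`F j` with values in `[0,1]`. -/
lemma abs_densEstRaw_sub_densTilde_le (d n : ℕ) (N : Fin d → ℕ) (x : Fin n → Fin d → ℝ)
    (F : Fin d → ℝ → ℝ) (hn : 0 < n) (hF : ∀ j t, F j t ∈ Set.Icc (0 : ℝ) 1) (M : ℝ)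
    (hM : ∀ j, (N j : ℝ) ≤ M) (hM0 : 0 ≤ M) (u : Fin d → ℝ)
    (hu : ∀ j, u j ∈ Set.Icc (0 : ℝ) 1) :
    |densEstRaw d n x N u - densTilde d n F x N u|
      ≤ (M + 1) ^ (2 * d + 2) * ∑ j, ⨆ t : ℝ, |empCDF n (fun k => x k j) t - F j t| := by
  set S := ∑ j, ⨆ t : ℝ, |empCDF n (fun k => x k j) t - F j t| with hS
  have hS0 : 0 ≤ S := Finset.sum_nonneg fun j _ => Real.iSup_nonneg fun _ => abs_nonneg _
  have hsup : ∀ i, ∑ j, |empCDF n (fun k => x k j) (x i j) - F j (x i j)| ≤ S := by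
    intro i
    refine Finset.sum_le_sum fun j _ => ?_
    refine le_ciSup (f := fun t : ℝ => |empCDF n (fun k => x k j) t - F j t|) ⟨1, ?_⟩ (x i j)
    rintro _ ⟨t, rfl⟩
    have h1 := empCDF_mem n (fun k => x k j) t
    have h2 := hF j t
    exact abs_le.2 ⟨by linarith [h1.1, h2.2], by linarith [h1.2, h2.1]⟩
  have hrho : ∀ m ∈ Fintype.piFinset fun j => Finset.range (N j + 1),
      |rhoHatRaw d n x m - rhoTilde d n F x m| ≤ QdSup m * ((M + 1) ^ 2 * S) := by
    intro m hm
    have hmM : ∀ j, (m j : ℝ) ≤ M := fun j => by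
      have h := Finset.mem_range.1 (Fintype.mem_piFinset.1 hm j)
      exact le_trans (by exact_mod_cast Nat.lt_succ_iff.1 h) (hM j)
    rw [rhoHatRaw, rhoTilde, ← mul_sub, ← Finset.sum_sub_distrib, abs_mul,
      abs_of_nonneg (by positivity : (0 : ℝ) ≤ 1 / n), one_div_mul_eq_div,
      div_le_iff₀ (by exact_mod_cast hn)]
    refine (Finset.abs_sum_le_sum_abs _ _).trans ((Finset.sum_le_card_nsmul _ _
      (QdSup m * ((M + 1) ^ 2 * S)) fun i _ => ?_).trans (le_of_eq ?_))
    · refine (abs_Qd_sub_le m M hmM (fun j => empCDF n (fun k => x k j) (x i j))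
        (fun j => F j (x i j)) (fun j => empCDF_mem _ _ _) (fun j => hF j _)).trans ?_
      exact mul_le_mul_of_nonneg_left
        (mul_le_mul_of_nonneg_left (hsup i) (by positivity)) (QdSup_nonneg m)
    · simp [mul_comm]
  rw [densEstRaw, densTilde, ← Finset.sum_sub_distrib]
  calc |∑ m ∈ Fintype.piFinset fun j => Finset.range (N j + 1),
        (rhoHatRaw d n x m * Qd m u - rhoTilde d n F x m * Qd m u)|
      ≤ ∑ m ∈ Fintype.piFinset fun j => Finset.range (N j + 1),
        (QdSup m * QdSup m) * ((M + 1) ^ 2 * S) := by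
        refine (Finset.abs_sum_le_sum_abs _ _).trans (Finset.sum_le_sum fun m hm => ?_)
        rw [← sub_mul, abs_mul]
        refine (mul_le_mul (hrho m hm) (abs_Qd_le m u hu) (abs_nonneg _)
          (mul_nonneg (QdSup_nonneg m) (by positivity))).trans (le_of_eq (by ring))
    _ ≤ (M + 1) ^ (2 * d) * ((M + 1) ^ 2 * S) := by
        rw [← Finset.sum_mul]
        exact mul_le_mul_of_nonneg_right (sum_QdSup_sq_le N M hM) (by positivity)
    _ = (M + 1) ^ (2 * d + 2) * S := by ring

/-! ### The estimate -/

/-- almost surely, the sup distance on `[0,1]^d` between the plug-in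
estimator `ĉ^[N]` and the pseudo-estimator `c̃^[N]` is at most
`2·3^d·(N_max+1)^{2d+2} · Σ_j sup_x |F̂_j(x) - F_j(x)|`. -/
theorem densEst_densTilde_sup_bound (d n : ℕ) (N : Fin d → ℕ)
    (Ω : Type*) [MeasurableSpace Ω] (μ : Measure Ω) [IsProbabilityMeasure μ]
    (X : Fin n → Ω → (Fin d → ℝ)) (F : Fin d → ℝ → ℝ)
    (hF : ∀ i j t, F j t = (μ {ω | X i ω j ≤ t}).toReal) :
    ∀ᵐ ω ∂μ, ∀ u : Fin d → ℝ, (∀ j, u j ∈ Set.Icc (0 : ℝ) 1) →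
      |densEstRaw d n (fun i => X i ω) N u - densTilde d n F (fun i => X i ω) N u|
        ≤ 2 * 3 ^ d * (((Finset.univ.sup N : ℕ) : ℝ) + 1) ^ (2 * d + 2)
            * ∑ j, ⨆ t : ℝ, |empCDF n (fun k => X k ω j) t - F j t| := by
  refine ae_of_all _ fun ω u hu => ?_
  set S := ∑ j, ⨆ t : ℝ, |empCDF n (fun k => X k ω j) t - F j t|
  set M : ℝ := ((Finset.univ.sup N : ℕ) : ℝ)
  have hS0 : 0 ≤ S := Finset.sum_nonneg fun j _ => Real.iSup_nonneg fun _ => abs_nonneg _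
  have hM0 : 0 ≤ M := Nat.cast_nonneg _
  -- With an empty sample both estimators vanish, and `hF` says nothing about `F`.
  rcases Nat.eq_zero_or_pos n with rfl | hn
  · have h0 : densEstRaw d 0 (fun i => X i ω) N u - densTilde d 0 F (fun i => X i ω) N u = 0 := by
      simp [densEstRaw, densTilde, rhoHatRaw, rhoTilde]
    rw [h0, abs_zero]
    positivity
  · have hF01 : ∀ j t, F j t ∈ Set.Icc (0 : ℝ) 1 := fun j t => by
      rw [hF ⟨0, hn⟩ j t]
      exact ⟨ENNReal.toReal_nonneg, ENNReal.toReal_le_of_le_ofReal zero_le_one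
        (by simpa using prob_le_one)⟩
    have hNM : ∀ j, (N j : ℝ) ≤ M := fun j => 
      Nat.cast_le.2 (Finset.le_sup (f := N) (Finset.mem_univ j))
    refine (abs_densEstRaw_sub_densTilde_le d n N (fun i => X i ω) F hn hF01 M hNM hM0 u
      hu).trans (mul_le_mul_of_nonneg_right ?_ hS0)
    have h3 : (1 : ℝ) ≤ 3 ^ d := one_le_pow₀ (by norm_num)
    exact le_mul_of_one_le_left (by positivity) (by linarith)
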